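/- arXiv:2106.12977 — 5 statements merged into one kernel-verified Lean document; each statement's English description precedes it below -/
import Mathlib

section
/- Every matching problem possesses at least one stable matching. -/
/-- `(w,f)` blocks the matching `μ`: `f ≻_w μ(w)` and `w ≻_f μ⁻¹(f)`.
`prefW w f f'` means worker `w` strictly prefers firm `f` to firm `f'`;
`prefF f w w'` means firm `f` strictly prefers worker `w` to worker `w'`. -/
def Blocks {W F : Type*} (prefW : W → F → F → Prop) (prefF : F → W → W → Prop)
    (μ : W ≃ F) (w : W) (f : F) : Prop :=
  prefW w f (μ w) ∧ prefF f w (μ.symm f)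

/-- A matching is stable if no pair blocks it. -/
def IsStableMatching {W F : Type*} (prefW : W → F → F → Prop)
    (prefF : F → W → W → Prop) (μ : W ≃ F) : Prop :=
  ∀ w f, ¬ Blocks prefW prefF μ w f

/-- A pair `(w,f)` is unattractive in `S`. -/
def Unattractive {W F : Type*} (prefW : W → F → F → Prop) (prefF : F → W → W → Prop)
    (S : Set (W × F)) (w : W) (f : F) : Prop :=
  (∃ f', (w, f') ∈ S ∧ prefW w f' f ∧
      ∀ w', w' ≠ w → (w', f') ∈ S → prefF f' w w') ∨
  (∃ w', (w', f) ∈ S ∧ prefF f w' w ∧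
      ∀ f'', f'' ≠ f → (w', f'') ∈ S → prefW w' f f'')

/-- `delta S` is `S` with all pairs unattractive in `S` removed. -/
def delta {W F : Type*} (prefW : W → F → F → Prop) (prefF : F → W → W → Prop)
    (S : Set (W × F)) : Set (W × F) :=
  {p ∈ S | ¬ Unattractive prefW prefF S p.1 p.2}

/-- The normal form: the fixed point of `delta` reached by iterating from `W × F`.
Since `delta S ⊆ S` and `W × F` is finite, `Fintype.card (W × F)` iterations suffice. -/
def NormalForm (W F : Type*) [Fintype W] [Fintype F]
    (prefW : W → F → F → Prop) (prefF : F → W → W → Prop) : Set (W × F) :=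
  (delta prefW prefF)^[Fintype.card (W × F)] Set.univ

/-- `μ` is `S`-stable: `S`-admissible and no pair of `S` blocks it within `S`. -/
def SStable {W F : Type*} (prefW : W → F → F → Prop) (prefF : F → W → W → Prop)
    (S : Set (W × F)) (μ : W ≃ F) : Prop :=
  (∀ w, (w, μ w) ∈ S) ∧
  ∀ w f, (w, f) ∈ S → ¬ (prefW w f (μ w) ∧ prefF f w (μ.symm f))

/-- Arcs of the matching digraph `D(S)`: from `(w,f)` to `(w,f')` whenever `f' ≻_w f`,
and from `(w,f)` to `(w',f)` whenever `w' ≻_f w`. -/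
def Arc {W F : Type*} (prefW : W → F → F → Prop) (prefF : F → W → W → Prop)
    (S : Set (W × F)) (p q : W × F) : Prop :=
  p ∈ S ∧ q ∈ S ∧
    ((p.1 = q.1 ∧ prefW p.1 q.2 p.2) ∨ (p.2 = q.2 ∧ prefF p.2 q.1 p.1))

/-- `D(S)` contains a directed cycle: distinct vertices `c 0, …, c (n-1)` with `n ≥ 1`,
`c n = c 0`, and an arc from each vertex to the next. -/
def HasDirectedCycle {W F : Type*} (prefW : W → F → F → Prop)
    (prefF : F → W → W → Prop) (S : Set (W × F)) : Prop :=
  ∃ (n : ℕ) (c : Fin (n + 1) → W × F), 0 < n ∧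
    Function.Injective (fun i : Fin n => c i.castSucc) ∧
    c (Fin.last n) = c 0 ∧
    ∀ i : Fin n, Arc prefW prefF S (c i.castSucc) (c i.succ)

/-- The preference lists possess a cycle: there are `k ≥ 2`, distinct workers
`w_1, …, w_k` and distinct firms `f_1, …, f_k` (indexed by `ZMod k`) with
`f_{j+1} ≻_{w_j} f_j` and `w_j ≻_{f_j} w_{j-1}` for all `j`, indices modulo `k`. -/
def PrefCycle {W F : Type*} (prefW : W → F → F → Prop)
    (prefF : F → W → W → Prop) : Prop :=
  ∃ k : ℕ, 2 ≤ k ∧ ∃ (ws : ZMod k → W) (fs : ZMod k → F),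
    Function.Injective ws ∧ Function.Injective fs ∧
    ∀ j : ZMod k, prefW (ws j) (fs (j + 1)) (fs j) ∧ prefF (fs j) (ws j) (ws (j - 1))

/-- `f` is the favourite firm of `w` among those that have not rejected `w`,
where `R` is the set of rejections. -/
def IsFavourite {W F : Type*} (prefW : W → F → F → Prop) (R : Set (W × F))
    (w : W) (f : F) : Prop :=
  (w, f) ∉ R ∧ ∀ f', prefW w f' f → (w, f') ∈ R

/-- Every rejection `(w,f)` in `R` is justified by a worker whom `f` prefers to `w` and
whose favourite remaining firm is `f`. -/
def IsJustified {W F : Type*} (prefW : W → F → F → Prop) (prefF : F → W → W → Prop)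
    (R : Set (W × F)) : Prop :=
  ∀ w f, (w, f) ∈ R → ∃ w', prefF f w' w ∧ IsFavourite prefW R w' f

theorem IsFavourite.eq {W F : Type*} {prefW : W → F → F → Prop} {R : Set (W × F)}
    {w : W} {f g : F} [IsStrictTotalOrder F (prefW w)]
    (hf : IsFavourite prefW R w f) (hg : IsFavourite prefW R w g) : f = g := by
  rcases trichotomous_of (prefW w) f g with h | h | h
  · exact absurd (hg.2 f h) hf.1
  · exact h
  · exact absurd (hf.2 g h) hg.1

theorem exists_isFavourite {W F : Type*} [Finite F] (prefW : W → F → F → Prop)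
    {R : Set (W × F)} {w : W} {f : F} [IsStrictTotalOrder F (prefW w)] (hf : (w, f) ∉ R) :
    ∃ g, IsFavourite prefW R w g := by
  obtain ⟨g, hg, hmin⟩ :=
    (Finite.wellFounded_of_trans_of_irrefl (prefW w)).has_min {g | (w, g) ∉ R} ⟨f, hf⟩
  exact ⟨g, hg, fun f' h => by_contra fun hn => hmin f' hn h⟩

/-- A firm that is the favourite of two workers may reject the one it likes less. -/
theorem IsJustified.insert {W F : Type*} {prefW : W → F → F → Prop}
    {prefF : F → W → W → Prop} {R : Set (W × F)} (hR : IsJustified prefW prefF R)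
    {v w : W} {f : F} [IsStrictTotalOrder W (prefF f)]
    (hv : IsFavourite prefW R v f) (hvw : prefF f v w) :
    IsJustified prefW prefF (insert (w, f) R) := by
  have hne : v ≠ w := by
    rintro rfl
    exact irrefl_of (prefF f) v hvw
  have hfav : ∀ u g, IsFavourite prefW R u g → (u, g) ≠ (w, f) →
      IsFavourite prefW (Insert.insert (w, f) R) u g := fun u g hu hug =>
    ⟨fun h => h.elim hug hu.1, fun f' h => Or.inr (hu.2 f' h)⟩
  have hv' := hfav v f hv (by simp [hne])
  rintro u g (hug | hug)
  · obtain ⟨rfl, rfl⟩ := Prod.mk.inj hug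
    exact ⟨v, hvw, hv'⟩
  · obtain ⟨w', hw', hfav'⟩ := hR u g hug
    by_cases heq : (w', g) = (w, f)
    · obtain ⟨rfl, rfl⟩ := Prod.mk.inj heq
      exact ⟨v, trans_of (prefF g) hvw hw', hv'⟩
    · exact ⟨w', hw', hfav w' g hfav' heq⟩

/-- If all rejections are justified, then no worker has been rejected by every firm. -/
theorem IsJustified.exists_notMem {W F : Type*} [Fintype W] [Fintype F]
    (hcard : Fintype.card W = Fintype.card F)
    {prefW : W → F → F → Prop} {prefF : F → W → W → Prop}
    (hW : ∀ w, IsStrictTotalOrder F (prefW w))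
    {R : Set (W × F)} (hR : IsJustified prefW prefF R) (w : W) : ∃ f, (w, f) ∉ R := by
  by_contra! hall
  choose g _ hg using fun f => hR w f (hall f)
  have hinj : Function.Injective g := fun a b hab =>
    (hg a).eq (hab ▸ hg b)
  obtain ⟨f, rfl⟩ := ((Fintype.bijective_iff_injective_and_card g).2 ⟨hinj, hcard.symm⟩).2 w
  exact (hg f).1 (hall f)

/-- Every matching problem possesses at least one stable matching. -/
theorem exists_stable_matching {W F : Type*} [Fintype W] [Fintype F] [Nonempty W]
    (hcard : Fintype.card W = Fintype.card F)
    (prefW : W → F → F → Prop) (prefF : F → W → W → Prop)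
    (hW : ∀ w, IsStrictTotalOrder F (prefW w))
    (hF : ∀ f, IsStrictTotalOrder W (prefF f)) :
    ∃ μ : W ≃ F, IsStableMatching prefW prefF μ := by
  obtain ⟨R, hR⟩ := (Set.toFinite {R | IsJustified prefW prefF R}).exists_maximal
    ⟨∅, fun _ _ h => h.elim⟩
  have hjust : IsJustified prefW prefF R := hR.prop
  choose μ hμ using fun w =>
    have ⟨_, hf⟩ := hjust.exists_notMem hcard hW w
    exists_isFavourite prefW hf
  have hnot : ∀ v w, μ v = μ w → ¬ prefF (μ w) v w := fun v w hvw hpref =>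
    (hμ w).1 (hR.le_of_ge (hjust.insert (hvw ▸ hμ v) hpref) (Set.subset_insert _ _)
      (Set.mem_insert _ _))
  have hinj : Function.Injective μ := by
    intro v w hvw
    rcases trichotomous_of (prefF (μ w)) v w with h | h | h
    · exact absurd h (hnot v w hvw)
    · exact h
    · exact absurd (hvw ▸ h) (hnot w v hvw.symm)
  let e := Equiv.ofBijective μ ((Fintype.bijective_iff_injective_and_card μ).2 ⟨hinj, hcard⟩)
  refine ⟨e, fun w f ⟨hwf, hfw⟩ => ?_⟩
  obtain ⟨w', hpref, hfav⟩ := hjust w f ((hμ w).2 f hwf)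
  have hw' : e.symm f = w' := e.symm_apply_eq.2 (hfav.eq (hμ w'))
  rw [hw'] at hfw
  exact asymm_of (prefF f) hpref hfw
end

section
/- For every set S ⊆ W × F, if a pair (w,f) ∈ S is unattractive in S, then no S-stable matching μ satisfies μ(w) = f. -/
/-- If `(w,f) ∈ S` is unattractive in `S`, then no `S`-stable matching matches `w` with `f`. -/
theorem unattractive_not_matched {W F : Type*} [Fintype W] [Fintype F] [Nonempty W]
    (hcard : Fintype.card W = Fintype.card F)
    (prefW : W → F → F → Prop) (prefF : F → W → W → Prop)
    (hW : ∀ w, IsStrictTotalOrder F (prefW w))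
    (hF : ∀ f, IsStrictTotalOrder W (prefF f))
    (S : Set (W × F)) (w : W) (f : F)
    (hmem : (w, f) ∈ S)
    (hun : Unattractive prefW prefF S w f)
    (μ : W ≃ F) (hμ : SStable prefW prefF S μ) :
    μ w ≠ f := by
  rintro rfl
  obtain ⟨hadm, hstable⟩ := hμ
  rcases hun with ⟨f', hf'S, hpref, hbest⟩ | ⟨w', hw'S, hpref, hbest⟩
  · refine hstable w f' hf'S ⟨hpref, hbest _ ?_ (by simpa using hadm (μ.symm f'))⟩
    intro h
    rw [(Equiv.symm_apply_eq μ).mp h] at hpref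
    exact (hW w).irrefl _ hpref
  · refine hstable w' (μ w) hw'S ⟨hbest _ ?_ (hadm w'), by simpa using hpref⟩
    intro h
    rw [μ.injective h] at hpref
    exact (hF (μ w)).irrefl _ hpref
end

section
/- For every set S ⊆ W × F, a matching μ is S-stable if and only if μ is Δ(S)-stable; that is, one round of deletion of unattractive pairs does not change the set of stable matchings. -/
section Unattractive

variable {W F : Type*} {prefW : W → F → F → Prop} {prefF : F → W → W → Prop}
  {S : Set (W × F)} {μ : W ≃ F}

theorem unattractive_swap {w : W} {f : F} :
    Unattractive prefF prefW (Prod.swap ⁻¹' S) f w ↔ Unattractive prefW prefF S w f :=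
  or_comm

theorem delta_swap :
    delta prefF prefW (Prod.swap ⁻¹' S) = Prod.swap ⁻¹' delta prefW prefF S := by
  ext ⟨f, w⟩
  exact and_congr Iff.rfl (not_congr unattractive_swap)

theorem SStable.swap (h : SStable prefW prefF S μ) :
    SStable prefF prefW (Prod.swap ⁻¹' S) μ.symm :=
  ⟨fun f => by simpa using h.1 (μ.symm f), fun f w hS hb => h.2 w f hS hb.symm⟩

/-- A firm that ranks `w` first within `S` prefers `w` to its partner in an `S`-admissible
matching, unless that partner is `w`. -/
theorem prefF_symm_of_forall_prefF [∀ w, IsStrictTotalOrder F (prefW w)]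
    (hμ : ∀ w, (w, μ w) ∈ S) {w : W} {f : F} (hf : prefW w f (μ w))
    (htop : ∀ w', w' ≠ w → (w', f) ∈ S → prefF f w w') : prefF f w (μ.symm f) := by
  refine htop _ ?_ (by simpa using hμ (μ.symm f))
  rintro rfl
  rw [μ.apply_symm_apply] at hf
  exact irrefl _ hf

theorem SStable.not_prefW_of_forall_prefF [∀ w, IsStrictTotalOrder F (prefW w)]
    (h : SStable prefW prefF S μ) {w : W} {f : F} (hS : (w, f) ∈ S)
    (htop : ∀ w', w' ≠ w → (w', f) ∈ S → prefF f w w') : ¬ prefW w f (μ w) :=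
  fun hf => h.2 w f hS ⟨hf, prefF_symm_of_forall_prefF h.1 hf htop⟩

/-- Among the firms that rank `w` first within `S`, the one `w` likes best survives in
`delta S`. -/
theorem exists_mem_delta_of_forall_prefF [Finite F]
    [∀ w, IsStrictTotalOrder F (prefW w)] [∀ f, IsStrictTotalOrder W (prefF f)]
    {w : W} {f f' : F} (hS : (w, f') ∈ S) (hf : prefW w f' f)
    (htop : ∀ w', w' ≠ w → (w', f') ∈ S → prefF f' w w') :
    ∃ m, (w, m) ∈ delta prefW prefF S ∧ prefW w m f ∧
      ∀ w', w' ≠ w → (w', m) ∈ S → prefF m w w' := by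
  obtain ⟨m, ⟨hmS, hmf, hmtop⟩, hmin⟩ :=
    (Finite.wellFounded_of_trans_of_irrefl (prefW w)).has_min
      {m | (w, m) ∈ S ∧ prefW w m f ∧ ∀ w', w' ≠ w → (w', m) ∈ S → prefF m w w'}
      ⟨f', hS, hf, htop⟩
  refine ⟨m, ⟨hmS, ?_⟩, hmf, hmtop⟩
  rintro (⟨g, hgS, hgm, hgtop⟩ | ⟨w', hw'S, hw'w, -⟩)
  · exact hmin g ⟨hgS, _root_.trans hgm hmf, hgtop⟩ hgm
  · have hne : w' ≠ w := by
      rintro rfl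
      exact irrefl _ hw'w
    exact asymm hw'w (hmtop w' hne hw'S)

theorem SStable.not_prefW_of_delta [Finite F]
    [∀ w, IsStrictTotalOrder F (prefW w)] [∀ f, IsStrictTotalOrder W (prefF f)]
    (h : SStable prefW prefF (delta prefW prefF S) μ) {w : W} {f f' : F}
    (hS : (w, f') ∈ S) (hf : prefW w f' f)
    (htop : ∀ w', w' ≠ w → (w', f') ∈ S → prefF f' w w') : ¬ prefW w f (μ w) := by
  intro hfμ
  obtain ⟨m, hm, hmf, hmtop⟩ := exists_mem_delta_of_forall_prefF hS hf htop
  exact h.not_prefW_of_forall_prefF hm (fun w' hne hw' => hmtop w' hne hw'.1)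
    (_root_.trans hmf hfμ)

end Unattractive

/-- One round of deletion of unattractive pairs does not change the set of stable matchings:
for every `S ⊆ W × F`, a matching is `S`-stable iff it is `Δ(S)`-stable. -/
theorem sStable_delta_iff {W F : Type*} [Fintype W] [Fintype F] [Nonempty W]
    (hcard : Fintype.card W = Fintype.card F)
    (prefW : W → F → F → Prop) (prefF : F → W → W → Prop)
    (hW : ∀ w, IsStrictTotalOrder F (prefW w))
    (hF : ∀ f, IsStrictTotalOrder W (prefF f))
    (S : Set (W × F)) (μ : W ≃ F) :
    SStable prefW prefF S μ ↔ SStable prefW prefF (delta prefW prefF S) μ := by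
  constructor
  · refine fun h => ⟨fun w => ⟨h.1 w, ?_⟩, fun w f hS => h.2 w f hS.1⟩
    rintro (⟨f', hS, hf, htop⟩ | ⟨w', hS, hw, htop⟩)
    · exact h.not_prefW_of_forall_prefF hS htop hf
    · exact h.swap.not_prefW_of_forall_prefF hS htop (by simpa using hw)
  · refine fun h => ⟨fun w => (h.1 w).1, fun w f hS hb => ?_⟩
    by_cases hu : Unattractive prefW prefF S w f
    · rcases hu with ⟨f', hS', hf, htop⟩ | ⟨w', hS', hw, htop⟩
      · exact h.not_prefW_of_delta hS' hf htop hb.1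
      · have hswap := h.swap
        rw [← delta_swap] at hswap
        exact hswap.not_prefW_of_delta hS' hw htop hb.2
    · exact h.2 w f ⟨hS, hu⟩ hb
end

section
/- Every stable matching survives the iterated deletion of unattractive alternatives: for every stable matching μ of the matching problem and every worker w, the pair (w, μ(w)) belongs to the normal form S*. -/
/-- If a stable matching lies in `S`, none of its pairs is unattractive in `S`. -/
theorem IsStableMatching.not_unattractive {W F : Type*} {prefW : W → F → F → Prop}
    {prefF : F → W → W → Prop} (hW : ∀ w, Std.Irrefl (prefW w))
    (hF : ∀ f, Std.Irrefl (prefF f)) {μ : W ≃ F} (hμ : IsStableMatching prefW prefF μ)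
    {S : Set (W × F)} (hS : ∀ w, (w, μ w) ∈ S) (w : W) :
    ¬ Unattractive prefW prefF S w (μ w) := by
  rintro (⟨f, -, hf, htop⟩ | ⟨w', -, hpref, htop⟩)
  · refine hμ w f ⟨hf, htop _ ?_ (by simpa using hS (μ.symm f))⟩
    rintro rfl
    exact (hW _).irrefl _ (by simpa using hf)
  · refine hμ w' (μ w) ⟨htop _ ?_ (hS w'), by simpa using hpref⟩
    intro h
    obtain rfl := μ.injective h
    exact (hF _).irrefl _ hpref

/-- A stable matching survives every number of rounds of deletion. -/
theorem IsStableMatching.mem_iterate_delta {W F : Type*} {prefW : W → F → F → Prop}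
    {prefF : F → W → W → Prop} (hW : ∀ w, Std.Irrefl (prefW w))
    (hF : ∀ f, Std.Irrefl (prefF f)) {μ : W ≃ F} (hμ : IsStableMatching prefW prefF μ)
    (n : ℕ) (w : W) : (w, μ w) ∈ (delta prefW prefF)^[n] Set.univ := by
  induction n generalizing w with
  | zero => trivial
  | succ n ih =>
    rw [Function.iterate_succ_apply']
    exact ⟨ih w, hμ.not_unattractive hW hF ih w⟩

/-- Every stable matching survives the iterated deletion of unattractive alternatives. -/
theorem stable_subset_normalForm {W F : Type*} [Fintype W] [Fintype F] [Nonempty W]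
    (hcard : Fintype.card W = Fintype.card F)
    (prefW : W → F → F → Prop) (prefF : F → W → W → Prop)
    (hW : ∀ w, IsStrictTotalOrder F (prefW w))
    (hF : ∀ f, IsStrictTotalOrder W (prefF f))
    (μ : W ≃ F) (hμ : IsStableMatching prefW prefF μ) (w : W) :
    (w, μ w) ∈ NormalForm W F prefW prefF :=
  hμ.mem_iterate_delta (fun w => (hW w).toIrrefl) (fun f => (hF f).toIrrefl) _ w
end

section
/- For every firm f the set {w ∈ W : (w,f) ∈ S*} is nonempty, and there is a stable matching μ_F of the matching problem such that for every firm f, μ_F⁻¹(f) is the ≻_f-greatest worker in {w ∈ W : (w,f) ∈ S*}. -/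
/-- In a finite strict order every inhabited predicate has a most preferred element. -/
theorem exists_most_preferred {α : Type*} [Finite α] (r : α → α → Prop)
    [IsStrictTotalOrder α r] (P : α → Prop) (h : ∃ a, P a) :
    ∃ a, P a ∧ ∀ b, P b → ¬ r b a :=
  (Finite.wellFounded_of_trans_of_irrefl r).has_min {a | P a} h

theorem delta_subset {W F : Type*} (prefW : W → F → F → Prop) (prefF : F → W → W → Prop)
    (S : Set (W × F)) : delta prefW prefF S ⊆ S :=
  fun _ hp => hp.1

/-- A pair that is unattractive in `S` remains unattractive in `delta S`. -/
theorem Unattractive.delta {W F : Type*} [Finite W] [Finite F]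
    {prefW : W → F → F → Prop} {prefF : F → W → W → Prop}
    (hW : ∀ w, IsStrictTotalOrder F (prefW w))
    (hF : ∀ f, IsStrictTotalOrder W (prefF f))
    {S : Set (W × F)} {w : W} {f : F} (h : Unattractive prefW prefF S w f) :
    Unattractive prefW prefF (delta prefW prefF S) w f := by
  rcases h with h | h
  · have := hW w
    obtain ⟨g, ⟨hgS, hgf, hg⟩, hbest⟩ := exists_most_preferred (prefW w) _ h
    refine Or.inl ⟨g, ⟨hgS, ?_⟩, hgf, fun w' hne hw' => hg w' hne hw'.1⟩
    rintro (⟨g', hg'S, hg'g, hg'⟩ | ⟨w', hw'S, hw'w, -⟩)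
    · exact hbest g' ⟨hg'S, _root_.trans hg'g hgf, hg'⟩ hg'g
    · have := hF g
      by_cases hne : w' = w
      · subst hne
        exact irrefl _ hw'w
      · exact asymm (hg w' hne hw'S) hw'w
  · have := hF f
    obtain ⟨v, ⟨hvS, hvw, hv⟩, hbest⟩ := exists_most_preferred (prefF f) _ h
    refine Or.inr ⟨v, ⟨hvS, ?_⟩, hvw, fun g hne hg => hv g hne hg.1⟩
    rintro (⟨g, hgS, hgf, -⟩ | ⟨v', hv'S, hv'v, hv'⟩)
    · have := hW v
      by_cases hne : g = f
      · subst hne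
        exact irrefl _ hgf
      · exact asymm (hv g hne hgS) hgf
    · exact hbest v' ⟨hv'S, _root_.trans hv'v hvw, hv'⟩ hv'v

/-- Iterating a deflationary operator on sets of a finite type as often as the type has
elements reaches a fixed point. -/
theorem iterate_card_fixed {α : Type*} [Fintype α] (d : Set α → Set α) (hd : ∀ S, d S ⊆ S)
    (S : Set α) : d (d^[Fintype.card α] S) = d^[Fintype.card α] S := by
  have key : ∀ k, d (d^[k] S) = d^[k] S ∨ (d^[k] S).ncard + k ≤ Fintype.card α := by
    intro k
    induction k with
    | zero =>
      right
      simpa [Nat.card_eq_fintype_card] using Set.ncard_le_card S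
    | succ k ih =>
      rw [Function.iterate_succ_apply']
      by_cases hfix : d (d^[k] S) = d^[k] S
      · left
        rw [hfix, hfix]
      · right
        have hle := ih.resolve_left hfix
        have hlt := Set.ncard_lt_ncard ((hd _).ssubset_of_ne hfix) (Set.toFinite _)
        omega
  rcases key (Fintype.card α) with h | h
  · exact h
  · have hempty : d^[Fintype.card α] S = ∅ :=
      (Set.ncard_eq_zero (Set.toFinite _)).1 (by omega)
    rw [hempty]
    exact Set.subset_empty_iff.1 (hd ∅)

/-- The pairs outside the normal form are exactly those unattractive in it. -/
theorem notMem_normalForm_iff {W F : Type*} [Fintype W] [Fintype F]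
    {prefW : W → F → F → Prop} {prefF : F → W → W → Prop}
    (hW : ∀ w, IsStrictTotalOrder F (prefW w))
    (hF : ∀ f, IsStrictTotalOrder W (prefF f)) (w : W) (f : F) :
    (w, f) ∉ NormalForm W F prefW prefF ↔
      Unattractive prefW prefF (NormalForm W F prefW prefF) w f := by
  constructor
  · have key : ∀ k, (w, f) ∉ (delta prefW prefF)^[k] Set.univ →
        Unattractive prefW prefF ((delta prefW prefF)^[k] Set.univ) w f := by
      intro k
      induction k with
      | zero => exact fun h => absurd (Set.mem_univ _) h
      | succ k ih =>
        rw [Function.iterate_succ_apply']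
        intro h
        apply Unattractive.delta hW hF
        by_cases hmem : (w, f) ∈ (delta prefW prefF)^[k] Set.univ
        · by_contra hun
          exact h ⟨hmem, hun⟩
        · exact ih hmem
    exact key _
  · intro hun hmem
    have hfix : delta prefW prefF (NormalForm W F prefW prefF) = NormalForm W F prefW prefF :=
      iterate_card_fixed _ (delta_subset prefW prefF) _
    rw [← hfix] at hmem
    exact hmem.2 hun

/-- If the pairs outside `S` are exactly those unattractive in `S`, then no firm's section of
`S` is empty. -/
theorem exists_mem_of_notMem_iff_unattractive {W F : Type*} [Fintype W] [Fintype F]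
    (hcard : Fintype.card W = Fintype.card F)
    {prefW : W → F → F → Prop} {prefF : F → W → W → Prop}
    (hF : ∀ f, IsStrictTotalOrder W (prefF f)) {S : Set (W × F)}
    (hS : ∀ w f, (w, f) ∉ S ↔ Unattractive prefW prefF S w f) (f : F) :
    ∃ w, (w, f) ∈ S := by
  by_contra! hf
  have hfirm : ∀ w, ∃ g, (w, g) ∈ S ∧ ∀ w', w' ≠ w → (w', g) ∈ S → prefF g w w' := by
    intro w
    rcases (hS w f).1 (hf w) with ⟨g, hg, -, htop⟩ | ⟨w', hw', -⟩
    · exact ⟨g, hg, htop⟩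
    · exact absurd hw' (hf w')
  choose g hg htop using hfirm
  have hinj : Function.Injective g := by
    intro w w' h
    by_contra hne
    have := hF (g w)
    have h₁ := htop w w' (Ne.symm hne) (h ▸ hg w')
    have h₂ := htop w' w hne (h ▸ hg w)
    rw [← h] at h₂
    exact asymm h₁ h₂
  obtain ⟨w, hw⟩ := ((Fintype.bijective_iff_injective_and_card g).2 ⟨hinj, hcard⟩).2 f
  exact hf w (hw ▸ hg w)

/-- For every firm `f` the set `{w | (w,f) ∈ S*}` is nonempty, and there is a stable
matching assigning to each firm its `≻_f`-greatest worker in that set. -/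
theorem firm_optimal_stable {W F : Type*} [Fintype W] [Fintype F] [Nonempty W]
    (hcard : Fintype.card W = Fintype.card F)
    (prefW : W → F → F → Prop) (prefF : F → W → W → Prop)
    (hW : ∀ w, IsStrictTotalOrder F (prefW w))
    (hF : ∀ f, IsStrictTotalOrder W (prefF f)) :
    (∀ f : F, ∃ w : W, (w, f) ∈ NormalForm W F prefW prefF) ∧
    ∃ μ : W ≃ F, IsStableMatching prefW prefF μ ∧
      ∀ f : F, (μ.symm f, f) ∈ NormalForm W F prefW prefF ∧
        ∀ w, (w, f) ∈ NormalForm W F prefW prefF → w ≠ μ.symm f → prefF f (μ.symm f) w := by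
  have hS := notMem_normalForm_iff hW hF
  have hne := exists_mem_of_notMem_iff_unattractive hcard hF hS
  refine ⟨hne, ?_⟩
  generalize NormalForm W F prefW prefF = S at hS hne ⊢
  have hgreatest : ∀ f, ∃ w, (w, f) ∈ S ∧ ∀ w', (w', f) ∈ S → w' ≠ w → prefF f w w' := by
    intro f
    have := hF f
    obtain ⟨w, hw, hbest⟩ := exists_most_preferred (prefF f) (fun w => (w, f) ∈ S) (hne f)
    refine ⟨w, hw, fun w' hw' hne' => ?_⟩
    rcases trichotomous_of (prefF f) w w' with h | h | h
    · exact h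
    · exact absurd h.symm hne'
    · exact absurd h (hbest w' hw')
  choose t htS htop using hgreatest
  have hinj : Function.Injective t := by
    intro f f' h
    by_contra hne'
    have := hW (t f)
    rcases trichotomous_of (prefW (t f)) f f' with hlt | heq | hlt
    · exact (hS (t f) f').2 (Or.inl ⟨f, htS f, hlt, fun w' hw' hm => htop f w' hm hw'⟩)
        (h ▸ htS f')
    · exact hne' heq
    · rw [h] at hlt
      exact (hS (t f') f).2 (Or.inl ⟨f', htS f', hlt, fun w' hw' hm => htop f' w' hm hw'⟩)
        (h ▸ htS f)
  let e : F ≃ W :=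
    Equiv.ofBijective t ((Fintype.bijective_iff_injective_and_card t).2 ⟨hinj, hcard.symm⟩)
  refine ⟨e.symm, ?_, fun f => ⟨htS f, htop f⟩⟩
  rintro w f ⟨hwf, hfw⟩
  obtain ⟨g, rfl⟩ := e.surjective w
  rw [e.symm_apply_apply] at hwf
  change prefF f (t g) (t f) at hfw
  change prefW (t g) f g at hwf
  have := hF f
  have := hW (t g)
  have hnot_pref : ∀ w, (w, f) ∈ S → ¬ prefF f w (t f) := by
    intro w hw hlt
    by_cases hwt : w = t f
    · rw [hwt] at hlt
      exact irrefl _ hlt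
    · exact asymm (htop f w hw hwt) hlt
  by_cases hmem : (t g, f) ∈ S
  · exact hnot_pref _ hmem hfw
  · rcases (hS _ _).1 hmem with ⟨f', hf'S, hf', htop'⟩ | ⟨w', hw'S, hw', -⟩
    · have heq : t f' = t g := by
        by_contra hne'
        have := hF f'
        exact asymm (htop' _ hne' (htS f')) (htop f' _ hf'S (Ne.symm hne'))
      rw [hinj heq] at hf'
      exact asymm hf' hwf
    · exact hnot_pref w' hw'S (_root_.trans hw' hfw)
end
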